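/- arXiv:1503.07211 — 3 statements merged into one kernel-verified Lean document; each statement's English description precedes it below -/
import Mathlib

section
/- Let k ≥ 1 and n ≥ 1, and let m be a natural number with m ≥ 2^{k-1}(2^n − 1). Then there exists a Markov kernel R in the closure of F_{m,n} such that the set of compositions R ∘ Q, as Q ranges over the closure of F_{k,m}, equals the whole set Δ_{k,n} of Markov kernels from {0,1}^k to distributions on {0,1}^n. (Universal approximation with fixed second-layer weights.) -/
open Finset

/-- The logistic sigmoid function `σ(a) = 1/(1+exp(-a))`. -/
noncomputable def sigmoid (a : ℝ) : ℝ := 1 / (1 + Real.exp (-a))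

/-- Real value of a bit. -/
def bval (b : Bool) : ℝ := if b then 1 else 0

/-- The set `F_{k,m}` of Markov kernels representable by a feedforward layer of `m`
sigmoid stochastic units with `k` binary inputs. -/
noncomputable def Fset (k m : ℕ) : Set ((Fin k → Bool) → (Fin m → Bool) → ℝ) :=
  {P | ∃ (V : Fin m → Fin k → ℝ) (c : Fin m → ℝ), ∀ y z,
    P y z = ∏ j, (if z j then sigmoid ((∑ i, V j i * bval (y i)) + c j)
                  else 1 - sigmoid ((∑ i, V j i * bval (y i)) + c j))}

/-- `Δ_{k,n}`: all Markov kernels from `{0,1}^k` to distributions on `{0,1}^n`. -/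
def markovKernels (k n : ℕ) : Set ((Fin k → Bool) → (Fin n → Bool) → ℝ) :=
  {P | (∀ y x, 0 ≤ P y x) ∧ ∀ y, ∑ x, P y x = 1}

/-- Composition of Markov kernels: `(R ∘ Q)(x|y) = ∑_z Q(z|y) R(x|z)`. -/
noncomputable def kcomp {k m n : ℕ} (R : (Fin m → Bool) → (Fin n → Bool) → ℝ)
    (Q : (Fin k → Bool) → (Fin m → Bool) → ℝ) : (Fin k → Bool) → (Fin n → Bool) → ℝ :=
  fun y x => ∑ z, Q y z * R z x

/-- `Δ_n`: probability distributions on `{0,1}^n`. -/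
def simplex (n : ℕ) : Set ((Fin n → Bool) → ℝ) :=
  {p | (∀ x, 0 ≤ p x) ∧ ∑ x, p x = 1}

/-- `Δ_n^+`: strictly positive probability distributions on `{0,1}^n`. -/
def simplexPos (n : ℕ) : Set ((Fin n → Bool) → ℝ) :=
  {p | (∀ x, 0 < p x) ∧ ∑ x, p x = 1}

/-- Mixture `p^⊤ R` of the rows of a kernel `R` with weights `p`. -/
noncomputable def mix {m n : ℕ} (p : (Fin m → Bool) → ℝ)
    (R : (Fin m → Bool) → (Fin n → Bool) → ℝ) : (Fin n → Bool) → ℝ :=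
  fun x => ∑ z, p z * R z x

/-- `E_m`: strictly positive product distributions on `{0,1}^m`, where the `j`-th bit
is `0` with probability `q j ∈ (0,1)`. -/
def Eset (m : ℕ) : Set ((Fin m → Bool) → ℝ) :=
  {p | ∃ q : Fin m → ℝ, (∀ j, q j ∈ Set.Ioo (0:ℝ) 1) ∧
    ∀ z, p z = ∏ j, (if z j then 1 - q j else q j)}

/-- Integer value of a binary vector (bit `i` has weight `2^i`). -/
def intval {k : ℕ} (y : Fin k → Bool) : ℕ := ∑ i, if y i then 2 ^ (i : ℕ) else 0

/-- `l(z)`: position (1-based) of the largest nonzero entry of `z`, and `0` if `z = 0`. -/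
def lidx {N : ℕ} (z : Fin N → Bool) : ℕ :=
  (Finset.univ.filter (fun j => z j = true)).sup (fun j => (j : ℕ) + 1)

/-- `bin_n(l)`: the `n`-bit binary representation of `l`. -/
def binVec (n l : ℕ) : Fin n → Bool := fun i => Nat.testBit l (i : ℕ)

/-- Point measure at `x ∈ {0,1}^n`. -/
noncomputable def deltaAt {n : ℕ} (x : Fin n → Bool) : (Fin n → Bool) → ℝ :=
  fun x' => if x' = x then 1 else 0

/-! Slots `1, …, m` are the hidden units and slot `0` means that no unit is active. The second layer
is deterministic: it outputs a label attached to `lidx z`, the last active slot, which a threshold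
unit can read off because the weights `±2^l` let the last active slot decide the sign. For
independent units, stick breaking (`q_j = w_j / (w_0 + ⋯ + w_j)`) realizes any distribution `w` of
`lidx z`. It remains to choose labels and `w`. A limit of sigmoid units can take arbitrary values on
one edge of the input cube and vanish elsewhere. So each of the `2^(k-1)` edges parallel to the
first axis owns `2^n - 1` units, labelled by the outputs other than a base output `x₀`; slot `0` is
labelled `x₀` and shared by all edges. -/

open Filter Topology

section BernoulliProducts

variable {ι : Type*} [Fintype ι]

/-- The product distribution on `{0,1}^ι` whose bit `j` is `1` with probability `q j`; each row of
a kernel in `F_{k,m}` is one. Nothing forces `q j ∈ [0,1]`. -/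
def bernoulliProd (q : ι → ℝ) (z : ι → Bool) : ℝ := ∏ j, if z j then q j else 1 - q j

theorem bernoulliProd_nonneg {q : ι → ℝ} (hq : ∀ j, q j ∈ Set.Icc 0 1) (z : ι → Bool) :
    0 ≤ bernoulliProd q z := by
  refine prod_nonneg fun j _ => ?_
  split_ifs
  · exact (hq j).1
  · exact sub_nonneg.2 (hq j).2

theorem sum_bernoulliProd [DecidableEq ι] (q : ι → ℝ) : ∑ z, bernoulliProd q z = 1 := by
  have h := prod_univ_sum (fun _ : ι => (univ : Finset Bool)) fun j b => if b then q j else 1 - q j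
  simp only [Fintype.piFinset_univ, Fintype.sum_bool, if_true, Bool.false_eq_true, if_false,
    add_sub_cancel, prod_const_one] at h
  exact h.symm

theorem continuous_bernoulliProd : Continuous (bernoulliProd : (ι → ℝ) → (ι → Bool) → ℝ) := by
  refine continuous_pi fun z => continuous_finsetProd _ fun j _ => ?_
  split_ifs <;> fun_prop

theorem bernoulliProd_bval {n : ℕ} (x : Fin n → Bool) :
    bernoulliProd (fun i => bval (x i)) = deltaAt x := by
  funext x'
  have factor : ∀ i, (if x' i then bval (x i) else 1 - bval (x i)) = if x' i = x i then 1 else 0 :=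
    fun i => by cases x' i <;> cases x i <;> simp [bval]
  simp only [bernoulliProd, deltaAt, factor, prod_ite_zero, prod_const_one, mem_univ, true_imp_iff,
    funext_iff]

theorem bernoulliProd_snoc {m : ℕ} (q : Fin (m + 1) → ℝ) (z : Fin m → Bool) (b : Bool) :
    bernoulliProd q (Fin.snoc z b) =
      (if b then q (Fin.last m) else 1 - q (Fin.last m)) * bernoulliProd (Fin.init q) z := by
  simp only [bernoulliProd, Fin.prod_univ_castSucc, Fin.snoc_castSucc, Fin.snoc_last, Fin.init,
    mul_comm]

theorem sum_bernoulliProd_mul_succ {m : ℕ} (q : Fin (m + 1) → ℝ)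
    (f : (Fin (m + 1) → Bool) → ℝ) :
    ∑ z, bernoulliProd q z * f z =
      q (Fin.last m) * ∑ z, bernoulliProd (Fin.init q) z * f (Fin.snoc z true) +
      (1 - q (Fin.last m)) * ∑ z, bernoulliProd (Fin.init q) z * f (Fin.snoc z false) := by
  have hsnoc : ∀ (b : Bool) (z : Fin m → Bool),
      Fin.snocEquiv (fun _ : Fin (m + 1) => Bool) (b, z) = Fin.snoc z b := fun _ _ => rfl
  rw [← (Fin.snocEquiv fun _ : Fin (m + 1) => Bool).sum_comp, Fintype.sum_prod_type,
    Fintype.sum_bool]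
  simp only [hsnoc, bernoulliProd_snoc, if_true, Bool.false_eq_true, if_false, mul_assoc, mul_sum]

end BernoulliProducts

section MarkovKernels

variable {k m n : ℕ}

theorem isClosed_markovKernels : IsClosed (markovKernels k n) := by
  simp only [markovKernels, Set.ofPred_and, Set.ofPred_forall]
  exact (isClosed_iInter fun y => isClosed_iInter fun x =>
      isClosed_le continuous_const (by fun_prop)).inter
    (isClosed_iInter fun y => isClosed_eq (by fun_prop) continuous_const)

theorem kcomp_mem_markovKernels {R : (Fin m → Bool) → (Fin n → Bool) → ℝ}
    {Q : (Fin k → Bool) → (Fin m → Bool) → ℝ} (hR : R ∈ markovKernels m n)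
    (hQ : Q ∈ markovKernels k m) : kcomp R Q ∈ markovKernels k n := by
  refine ⟨fun y x => sum_nonneg fun z _ => mul_nonneg (hQ.1 y z) (hR.1 z x), fun y => ?_⟩
  simp only [kcomp]
  rw [sum_comm]
  simp only [← mul_sum, hR.2, mul_one, hQ.2]

end MarkovKernels

section SigmoidUnits

variable {k m : ℕ}

theorem sigmoid_eq_real_sigmoid : sigmoid = Real.sigmoid := by
  funext a
  rw [sigmoid, Real.sigmoid_def, one_div]

/-- The affine function `v^⊤ y + c` of a bit vector, to which a unit applies the sigmoid. -/
def preactivation (v : Fin k → ℝ) (c : ℝ) (y : Fin k → Bool) : ℝ := (∑ i, v i * bval (y i)) + c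

theorem preactivation_smul_add (t : ℝ) (v w : Fin k → ℝ) (c d : ℝ) (y : Fin k → Bool) :
    preactivation (t • v + w) (t * c + d) y = t * preactivation v c y + preactivation w d y := by
  simp only [preactivation, Pi.add_apply, Pi.smul_apply, smul_eq_mul, add_mul, sum_add_distrib,
    mul_assoc, ← mul_sum]
  ring

theorem preactivation_cons (a c : ℝ) (v : Fin k → ℝ) (y : Fin (k + 1) → Bool) :
    preactivation (Fin.cons a v) c y = a * bval (y 0) + preactivation v c (Fin.tail y) := by
  simp only [preactivation, Fin.sum_univ_succ, Fin.cons_zero, Fin.cons_succ, Fin.tail, add_assoc]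

/-- The firing probabilities, as functions of the input, of a single sigmoid unit with `k` binary
inputs. -/
def sigmoidUnits (k : ℕ) : Set ((Fin k → Bool) → ℝ) :=
  {g | ∃ v c, g = fun y => sigmoid (preactivation v c y)}

theorem mem_Fset_iff {P : (Fin k → Bool) → (Fin m → Bool) → ℝ} :
    P ∈ Fset k m ↔
      ∃ g : Fin m → (Fin k → Bool) → ℝ, (∀ j, g j ∈ sigmoidUnits k) ∧
        P = fun y => bernoulliProd fun j => g j y := by
  constructor
  · rintro ⟨V, c, hP⟩
    exact ⟨fun j y => sigmoid (preactivation (V j) (c j) y), fun j => ⟨V j, c j, rfl⟩,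
      funext₂ hP⟩
  · rintro ⟨g, hg, rfl⟩
    choose V c hVc using hg
    refine ⟨V, c, fun y z => ?_⟩
    simp only [bernoulliProd, hVc, preactivation]

theorem closure_Fset_subset_markovKernels : closure (Fset k m) ⊆ markovKernels k m := by
  refine closure_minimal (fun P hP => ?_) isClosed_markovKernels
  obtain ⟨g, hg, rfl⟩ := mem_Fset_iff.1 hP
  have hg01 : ∀ y j, g j y ∈ Set.Icc 0 1 := by
    intro y j
    obtain ⟨v, c, hgj⟩ := hg j
    rw [hgj, sigmoid_eq_real_sigmoid]
    exact ⟨Real.sigmoid_nonneg _, Real.sigmoid_le_one _⟩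
  exact ⟨fun y => bernoulliProd_nonneg (hg01 y), fun y => sum_bernoulliProd _⟩

theorem bernoulliProd_mem_closure_Fset {g : Fin m → (Fin k → Bool) → ℝ}
    (hg : ∀ j, g j ∈ closure (sigmoidUnits k)) :
    (fun y => bernoulliProd fun j => g j y) ∈ closure (Fset k m) := by
  have hcont : Continuous fun (g : Fin m → (Fin k → Bool) → ℝ) y =>
      bernoulliProd fun j => g j y :=
    continuous_pi fun y => continuous_bernoulliProd.comp (by fun_prop)
  have hmem : g ∈ closure (Set.pi Set.univ fun _ => sigmoidUnits k) := by
    rw [closure_pi_set]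
    exact fun j _ => hg j
  exact map_mem_closure hcont hmem fun f hf =>
    mem_Fset_iff.2 ⟨f, fun j => hf j (Set.mem_univ j), rfl⟩

theorem tendsto_sigmoid_mul_add (a b : ℝ) :
    Tendsto (fun t => sigmoid (t * a + b)) atTop
      (𝓝 (if 0 < a then 1 else if a < 0 then 0 else sigmoid b)) := by
  rw [sigmoid_eq_real_sigmoid]
  rcases lt_trichotomy a 0 with ha | rfl | ha
  · rw [if_neg ha.not_gt, if_pos ha]
    exact Real.tendsto_sigmoid_atBot.comp
      (tendsto_atBot_add_const_right _ b (tendsto_id.atTop_mul_const_of_neg ha))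
  · simp
  · rw [if_pos ha]
    exact Real.tendsto_sigmoid_atTop.comp
      (tendsto_atTop_add_const_right _ b (tendsto_id.atTop_mul_const ha))

theorem ite_preactivation_mem_closure_sigmoidUnits (v w : Fin k → ℝ) (c d : ℝ) :
    (fun y => if 0 < preactivation v c y then 1
      else if preactivation v c y < 0 then 0 else sigmoid (preactivation w d y)) ∈
      closure (sigmoidUnits k) := by
  refine mem_closure_of_tendsto
    (tendsto_pi_nhds.2 fun y => tendsto_sigmoid_mul_add (preactivation v c y) _)
    (Eventually.of_forall fun t => ⟨t • v + w, t * c + d, ?_⟩)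
  simp only [preactivation_smul_add]

end SigmoidUnits

/-- The sign `+1` of a bit `1` and `-1` of a bit `0`. -/
def bitSign (b : Bool) : ℝ := if b then 1 else -1

section EdgeUnits

variable {k : ℕ}

theorem preactivation_bitSign_eq_neg_hammingDist (τ y : Fin k → Bool) :
    preactivation (fun i => bitSign (τ i)) (-∑ i, bval (τ i)) y = -hammingDist y τ := by
  rw [preactivation, ← sub_eq_add_neg, ← sum_sub_distrib, hammingDist, card_filter, Nat.cast_sum,
    ← sum_neg_distrib]
  refine sum_congr rfl fun i _ => ?_
  cases τ i <;> cases y i <;> simp [bitSign, bval]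

theorem ite_tail_eq_mem_closure_sigmoidUnits_of_mem_Ioo (τ : Fin k → Bool) {p : Bool → ℝ}
    (hp : ∀ b, p b ∈ Set.Ioo 0 1) :
    (fun y : Fin (k + 1) → Bool => if Fin.tail y = τ then p (y 0) else 0) ∈
      closure (sigmoidUnits (k + 1)) := by
  have hlogit : ∀ b, ∃ a, sigmoid a = p b := fun b => by
    rw [sigmoid_eq_real_sigmoid, ← Set.mem_range, Real.range_sigmoid]
    exact hp b
  choose a ha using hlogit
  convert ite_preactivation_mem_closure_sigmoidUnits
    (Fin.cons 0 fun i => bitSign (τ i)) (Fin.cons (a true - a false) 0)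
    (-∑ i, bval (τ i)) (a false) using 2 with y
  have hvalue : preactivation (Fin.cons (a true - a false) 0) (a false) y = a (y 0) := by
    rw [preactivation_cons]
    cases y 0 <;> simp [preactivation, bval]
  rw [preactivation_cons, zero_mul, zero_add, preactivation_bitSign_eq_neg_hammingDist, hvalue, ha]
  by_cases h : Fin.tail y = τ
  · simp [h]
  · have hdist : (0 : ℝ) < hammingDist (Fin.tail y) τ := mod_cast hammingDist_pos.2 h
    rw [if_neg h, if_neg (by linarith), if_pos (by linarith)]

theorem mem_closure_sigmoidUnits_of_support_subset_edge {g : (Fin (k + 1) → Bool) → ℝ}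
    (hg : ∀ y, g y ∈ Set.Icc 0 1) {τ : Fin k → Bool} (hsupp : ∀ y, g y ≠ 0 → Fin.tail y = τ) :
    g ∈ closure (sigmoidUnits (k + 1)) := by
  have hcont : Continuous fun (p : Bool → ℝ) (y : Fin (k + 1) → Bool) =>
      if Fin.tail y = τ then p (y 0) else 0 := by
    refine continuous_pi fun y => ?_
    split_ifs <;> fun_prop
  have hmem : (fun b => g (Fin.cons b τ)) ∈
      closure (Set.pi Set.univ fun _ : Bool => Set.Ioo (0 : ℝ) 1) := by
    rw [closure_pi_set, closure_Ioo zero_ne_one]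
    exact fun b _ => hg _
  convert closure_closure.subset (map_mem_closure hcont hmem fun p hp =>
    ite_tail_eq_mem_closure_sigmoidUnits_of_mem_Ioo τ fun b => hp b (Set.mem_univ b)) using 1
  funext y
  split_ifs with h
  · simp only [← h, Fin.cons_self_tail]
  · exact not_not.1 (mt (hsupp y) h)

end EdgeUnits

section LastActiveSlot

variable {m n : ℕ}

theorem lidx_le (z : Fin m → Bool) : lidx z ≤ m := Finset.sup_le fun j _ => j.2

theorem lt_lidx_of_eq_true {z : Fin m → Bool} {j : Fin m} (hj : z j = true) : j < lidx z :=
  le_sup (f := fun j : Fin m => (j : ℕ) + 1) (mem_filter.2 ⟨mem_univ j, hj⟩)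

theorem lidx_succ (z : Fin (m + 1) → Bool) :
    lidx z = if z (Fin.last m) then m + 1 else lidx (Fin.init z) := by
  split_ifs with hlast
  · exact (lidx_le z).antisymm (lt_lidx_of_eq_true hlast)
  · rw [lidx, Fin.univ_castSuccEmb, filter_cons, if_neg hlast, filter_map, sup_map]
    rfl

theorem lidx_snoc (z : Fin m → Bool) (b : Bool) :
    lidx (Fin.snoc z b : Fin (m + 1) → Bool) = if b then m + 1 else lidx z := by
  rw [lidx_succ, Fin.snoc_last, Fin.init_snoc]

/-- The affine function of `z` in which slot `l` has weight `±2^l` with sign `s l`, and slot `0`,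
always active, is the constant term. -/
def dominance (s : ℕ → Bool) (z : Fin m → Bool) : ℝ :=
  preactivation (fun j => bitSign (s (j + 1)) * 2 ^ ((j : ℕ) + 1)) (bitSign (s 0)) z

theorem dominance_succ (s : ℕ → Bool) (z : Fin (m + 1) → Bool) :
    dominance s z = dominance s (Fin.init z) +
      bitSign (s (m + 1)) * 2 ^ (m + 1) * bval (z (Fin.last m)) := by
  simp only [dominance, preactivation, Fin.sum_univ_castSucc, Fin.init, Fin.val_castSucc,
    Fin.val_last]
  ring

theorem abs_dominance_lt (s : ℕ → Bool) (z : Fin m → Bool) : |dominance s z| < 2 ^ (m + 1) := by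
  induction m with
  | zero => cases h : s 0 <;> simp [dominance, preactivation, bitSign, h]
  | succ m ih =>
    have hlast : |bitSign (s (m + 1)) * 2 ^ (m + 1) * bval (z (Fin.last m))| ≤ 2 ^ (m + 1) := by
      cases s (m + 1) <;> cases z (Fin.last m) <;> simp [bitSign, bval]
    calc |dominance s z|
        ≤ |dominance s (Fin.init z)| +
          |bitSign (s (m + 1)) * 2 ^ (m + 1) * bval (z (Fin.last m))| := by
            rw [dominance_succ]
            exact abs_add_le _ _
      _ < 2 ^ (m + 1) + 2 ^ (m + 1) := add_lt_add_of_lt_of_le (ih _) hlast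
      _ = 2 ^ (m + 1 + 1) := by ring

theorem bitSign_lidx_mul_dominance_pos (s : ℕ → Bool) (z : Fin m → Bool) :
    0 < bitSign (s (lidx z)) * dominance s z := by
  induction m with
  | zero => cases h : s 0 <;> simp [dominance, preactivation, bitSign, lidx, h]
  | succ m ih =>
    rw [lidx_succ, dominance_succ]
    cases z (Fin.last m)
    · simpa [bval] using ih (Fin.init z)
    · obtain ⟨hlower, hupper⟩ := abs_lt.1 (abs_dominance_lt s (Fin.init z))
      cases h : s (m + 1) <;>
        simp only [h, bitSign, bval, if_true, Bool.false_eq_true, if_false] <;> linarith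

theorem bval_lidx_mem_closure_sigmoidUnits (s : ℕ → Bool) :
    (fun z : Fin m → Bool => bval (s (lidx z))) ∈ closure (sigmoidUnits m) := by
  convert ite_preactivation_mem_closure_sigmoidUnits
    (fun j : Fin m => bitSign (s (j + 1)) * 2 ^ ((j : ℕ) + 1)) 0 (bitSign (s 0)) 0 using 2 with z
  have hpos := bitSign_lidx_mul_dominance_pos s z
  change _ = if 0 < dominance s z then 1 else if dominance s z < 0 then 0 else _
  cases h : s (lidx z) <;> simp only [h, bitSign, if_true, Bool.false_eq_true, if_false, one_mul,
    neg_one_mul, neg_pos] at hpos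
  · simp [bval, hpos, hpos.not_gt]
  · simp [bval, hpos]

/-- The deterministic kernel `z ↦ δ_{label (lidx z)}` that outputs the label of the last active
slot of `z`. -/
noncomputable def lastActiveKernel (label : ℕ → Fin n → Bool) :
    (Fin m → Bool) → (Fin n → Bool) → ℝ :=
  fun z => deltaAt (label (lidx z))

theorem lastActiveKernel_mem_closure_Fset (label : ℕ → Fin n → Bool) :
    lastActiveKernel label ∈ closure (Fset m n) := by
  have hunits := bernoulliProd_mem_closure_Fset (k := m) fun i : Fin n =>
    bval_lidx_mem_closure_sigmoidUnits fun l => label l i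
  simp only [bernoulliProd_bval] at hunits
  exact hunits

end LastActiveSlot

section StickBreaking

/-- The conditional probability of slot `j + 1` given one of the slots `0, …, j + 1`, for weights
`w`; it is `0` when all these weights vanish. -/
noncomputable def stickBreak (w : ℕ → ℝ) (j : ℕ) : ℝ := w (j + 1) / ∑ l ∈ range (j + 2), w l

variable {w : ℕ → ℝ}

theorem le_sum_range_of_nonneg (hw : ∀ l, 0 ≤ w l) (l : ℕ) : w l ≤ ∑ a ∈ range (l + 1), w a :=
  single_le_sum (fun a _ => hw a) (self_mem_range_succ l)

theorem stickBreak_mem_Icc (hw : ∀ l, 0 ≤ w l) (j : ℕ) : stickBreak w j ∈ Set.Icc 0 1 := by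
  have hsum : 0 ≤ ∑ l ∈ range (j + 2), w l := sum_nonneg fun l _ => hw l
  exact ⟨div_nonneg (hw _) hsum, div_le_one_of_le₀ (le_sum_range_of_nonneg hw (j + 1)) hsum⟩

theorem stickBreak_mul_sum (hw : ∀ l, 0 ≤ w l) (j : ℕ) :
    stickBreak w j * ∑ l ∈ range (j + 2), w l = w (j + 1) :=
  div_mul_cancel_of_imp fun hsum =>
    le_antisymm (hsum ▸ le_sum_range_of_nonneg hw (j + 1)) (hw _)

theorem sum_bernoulliProd_stickBreak_mul (hw : ∀ l, 0 ≤ w l) (f : ℕ → ℝ) (m : ℕ) :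
    (∑ z, bernoulliProd (fun j : Fin m => stickBreak w j) z * f (lidx z)) *
      ∑ l ∈ range (m + 1), w l = ∑ l ∈ range (m + 1), w l * f l := by
  induction m with
  | zero => simp [bernoulliProd, lidx, mul_comm]
  | succ m ih =>
    have hrestrict : Fin.init (fun j : Fin (m + 1) => stickBreak w j) =
        fun j : Fin m => stickBreak w j := rfl
    set expectation := ∑ z, bernoulliProd (fun j : Fin m => stickBreak w j) z * f (lidx z)
    have hlast := stickBreak_mul_sum hw m
    have hsplit := sum_range_succ w (m + 1)
    rw [sum_bernoulliProd_mul_succ, hrestrict, sum_range_succ (fun l => w l * f l), ← ih]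
    simp only [lidx_snoc, if_true, Bool.false_eq_true, if_false, ← sum_mul, sum_bernoulliProd,
      Fin.val_last]
    linear_combination (f (m + 1) - expectation) * hlast + expectation * hsplit

end StickBreaking

section Pushforward

variable {X : Type*} [Fintype X]

/-- The image under `f : X → ℕ` of the distribution with weights `p` on `X`. -/
def pushforward (f : X → ℕ) (p : X → ℝ) (l : ℕ) : ℝ := ∑ x with f x = l, p x

theorem pushforward_nonneg {p : X → ℝ} (hp : ∀ x, 0 ≤ p x) (f : X → ℕ) (l : ℕ) :
    0 ≤ pushforward f p l :=
  sum_nonneg fun x _ => hp x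

theorem sum_pushforward_mul {f : X → ℕ} {m : ℕ} (hf : ∀ x, f x ≤ m) (p : X → ℝ) (φ : ℕ → ℝ) :
    ∑ l ∈ range (m + 1), pushforward f p l * φ l = ∑ x, p x * φ (f x) := by
  rw [← sum_fiberwise_of_maps_to (g := f) (t := range (m + 1))
    fun x _ => mem_range_succ_iff.2 (hf x)]
  refine sum_congr rfl fun l _ => ?_
  rw [pushforward, sum_mul]
  exact sum_congr rfl fun x hx => by rw [(mem_filter.1 hx).2]

end Pushforward

/-- A distribution of the slots `0, …, m` among blocks `τ : T` in which each block has a slot for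
every output `x : X`. An output is determined by any of its slots, and every slot other than `0`
belongs to a single block. -/
structure SlotAssignment (T X : Type*) (m : ℕ) where
  slot : T → X → ℕ
  label : ℕ → X
  owner : ℕ → T
  slot_le : ∀ τ x, slot τ x ≤ m
  label_slot : ∀ τ x, label (slot τ x) = x
  owner_slot : ∀ τ x, slot τ x ≠ 0 → owner (slot τ x) = τ

namespace SlotAssignment

theorem nonempty_of_card_le {T X : Type*} [Fintype T] [Fintype X] [Nonempty T] [Nonempty X]
    {m : ℕ} (hm : Fintype.card T * (Fintype.card X - 1) ≤ m) :
    Nonempty (SlotAssignment T X m) := by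
  classical
  obtain ⟨τ₀⟩ := ‹Nonempty T›
  obtain ⟨x₀⟩ := ‹Nonempty X›
  have hcard : Fintype.card (T × {x // x ≠ x₀}) ≤ Fintype.card (Fin m) := by
    simpa [Fintype.card_subtype_compl] using hm
  obtain ⟨unit⟩ := Function.Embedding.nonempty_of_card_le hcard
  let code : Option (T × {x // x ≠ x₀}) → ℕ := fun s => s.elim 0 fun s => unit s + 1
  have hcode : Function.Injective code := by
    rintro (_ | s) (_ | s') h
    · rfl
    · exact absurd h (Nat.succ_ne_zero _).symm
    · exact absurd h (Nat.succ_ne_zero _)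
    · rw [unit.injective (Fin.ext (Nat.succ_injective h))]
  let slotCode : T → X → Option (T × {x // x ≠ x₀}) := fun τ x =>
    if h : x = x₀ then none else some (τ, ⟨x, h⟩)
  have hdecode : ∀ s, Function.invFun code (code s) = s := Function.leftInverse_invFun hcode
  refine ⟨{
    slot := fun τ x => code (slotCode τ x)
    label := fun l => (Function.invFun code l).elim x₀ fun s => s.2
    owner := fun l => (Function.invFun code l).elim τ₀ Prod.fst
    slot_le := fun τ x => ?_
    label_slot := fun τ x => ?_
    owner_slot := fun τ x hx => ?_ }⟩
  · by_cases h : x = x₀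
    · simp [slotCode, code, h]
    · simp [slotCode, code, h]
  · by_cases h : x = x₀ <;> simp [hdecode, slotCode, h]
  · by_cases h : x = x₀
    · simp [slotCode, code, h] at hx
    · simp [hdecode, slotCode, h]

variable {k m n : ℕ} (A : SlotAssignment (Fin k → Bool) (Fin n → Bool) m)
  {P : (Fin (k + 1) → Bool) → (Fin n → Bool) → ℝ}

/-- The desired distribution of the last active slot on input `y`: the row `P y` transported to the
slots of the block `Fin.tail y`, i.e. of the edge through `y` parallel to the first axis. -/
def slotWeights (P : (Fin (k + 1) → Bool) → (Fin n → Bool) → ℝ) (y : Fin (k + 1) → Bool) : ℕ → ℝ :=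
  pushforward (A.slot (Fin.tail y)) (P y)

theorem slotWeights_nonneg (hP : P ∈ markovKernels (k + 1) n) (y : Fin (k + 1) → Bool) (l : ℕ) :
    0 ≤ A.slotWeights P y l :=
  pushforward_nonneg (hP.1 y) _ l

theorem sum_slotWeights (hP : P ∈ markovKernels (k + 1) n) (y : Fin (k + 1) → Bool) :
    ∑ l ∈ range (m + 1), A.slotWeights P y l = 1 := by
  simpa [hP.2, slotWeights] using sum_pushforward_mul (A.slot_le (Fin.tail y)) (P y) 1

theorem tail_eq_owner_of_slotWeights_ne_zero {y : Fin (k + 1) → Bool} {l : ℕ} (hl : l ≠ 0)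
    (h : A.slotWeights P y l ≠ 0) : Fin.tail y = A.owner l := by
  obtain ⟨x, hx, -⟩ := exists_ne_zero_of_sum_ne_zero h
  obtain rfl := (mem_filter.1 hx).2
  exact (A.owner_slot _ x hl).symm

/-- The first layer whose last active slot has distribution `slotWeights P y` on input `y`. -/
noncomputable def firstLayer (P : (Fin (k + 1) → Bool) → (Fin n → Bool) → ℝ) :
    (Fin (k + 1) → Bool) → (Fin m → Bool) → ℝ :=
  fun y => bernoulliProd fun j => stickBreak (A.slotWeights P y) j

theorem firstLayer_mem_closure_Fset (hP : P ∈ markovKernels (k + 1) n) :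
    A.firstLayer P ∈ closure (Fset (k + 1) m) :=
  bernoulliProd_mem_closure_Fset fun j =>
    mem_closure_sigmoidUnits_of_support_subset_edge
      (fun y => stickBreak_mem_Icc (A.slotWeights_nonneg hP y) j)
      fun _ hy =>
        A.tail_eq_owner_of_slotWeights_ne_zero (Nat.succ_ne_zero j) (div_ne_zero_iff.1 hy).1

theorem kcomp_lastActiveKernel_firstLayer (hP : P ∈ markovKernels (k + 1) n) :
    kcomp (lastActiveKernel A.label) (A.firstLayer P) = P := by
  funext y x
  calc kcomp (lastActiveKernel A.label) (A.firstLayer P) y x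
      = ∑ l ∈ range (m + 1), A.slotWeights P y l * deltaAt (A.label l) x := by
        rw [← sum_bernoulliProd_stickBreak_mul (A.slotWeights_nonneg hP y) fun l =>
          deltaAt (A.label l) x, A.sum_slotWeights hP, mul_one]
        rfl
    _ = ∑ x', P y x' * deltaAt (A.label (A.slot (Fin.tail y) x')) x :=
        sum_pushforward_mul (A.slot_le _) _ _
    _ = P y x := by simp [A.label_slot, deltaAt]

end SlotAssignment

/-- Theorem 1 (fixed second-layer weights): if `m ≥ 2^(k-1)(2^n - 1)` then there is a
kernel `R` in the closure of `F_{m,n}` such that `{R ∘ Q : Q ∈ closure F_{k,m}} = Δ_{k,n}`. -/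
theorem universal_approximation_fixed_second_layer
    (k n m : ℕ) (hk : 1 ≤ k) (hn : 1 ≤ n)
    (hm : 2 ^ (k - 1) * (2 ^ n - 1) ≤ m) :
    ∃ R ∈ closure (Fset m n),
      (fun Q => kcomp R Q) '' closure (Fset k m) = markovKernels k n := by
  obtain ⟨k, rfl⟩ := Nat.exists_eq_add_of_le' hk
  obtain ⟨A⟩ : Nonempty (SlotAssignment (Fin k → Bool) (Fin n → Bool) m) :=
    SlotAssignment.nonempty_of_card_le (by simpa using hm)
  have hR : lastActiveKernel A.label ∈ closure (Fset m n) := lastActiveKernel_mem_closure_Fset _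
  refine ⟨lastActiveKernel A.label, hR, Set.Subset.antisymm ?_ fun P hP => ?_⟩
  · rintro _ ⟨Q, hQ, rfl⟩
    exact kcomp_mem_markovKernels (closure_Fset_subset_markovKernels hR)
      (closure_Fset_subset_markovKernels hQ)
  · exact ⟨A.firstLayer P, A.firstLayer_mem_closure_Fset hP,
      A.kcomp_lastActiveKernel_firstLayer hP⟩
end

section
/- Let k ≥ 1 and n ≥ 1. If there exists a Markov kernel R in the closure of F_{m,n} such that { R∘Q : Q in the closure of F_{k,m} } = Δ_{k,n}, then m ≥ ⌈2^k(2^n − 1)/(k+1)⌉. -/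
open Finset

/-!
Suppose `R ∘ Q` runs over all of `Δ_{k,n}` as `Q` runs over the closure of `F_{k,m}`. In the
`m (k + 1)` coordinates `exp (V j i)` and `exp (c j)` the sigmoid units, and with them all entries
of `R ∘ Q` for `Q ∈ F_{k,m}`, are rational functions. More than `m (k + 1)` rational functions in
`m (k + 1)` variables satisfy a nontrivial polynomial relation, and such a relation extends from
`F_{k,m}` to its closure by continuity. The `2^k (2^n - 1)` free entries of a kernel in `Δ_{k,n}`
fill a full-dimensional box, so they satisfy no such relation.
-/

open MvPolynomial

section RationalSubalgebra

theorem trdeg_localization {R A : Type*} [CommRing R] [CommRing A] [IsDomain A] [Algebra R A]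
    [FaithfulSMul R A] {S : Submonoid A} (hS : S ≤ nonZeroDivisors A) :
    Algebra.trdeg R (Localization S) = Algebra.trdeg R A := by
  have : Nontrivial R := (algebraMap R A).domain_nontrivial
  have : IsDomain (Localization S) := IsLocalization.isDomain_localization hS
  have : FaithfulSMul A (Localization S) :=
    (faithfulSMul_iff_algebraMap_injective _ _).2 (IsLocalization.injective _ hS)
  have : Algebra.IsAlgebraic A (Localization S) := IsLocalization.isAlgebraic _ S
  rw [← trdeg_add_eq R A (A := Localization S), trdeg_eq_zero (R := A), add_zero]

variable {K τ B : Type*} [Field K] [CommRing B] [Algebra K B]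

variable (K) in
/-- The polynomials over `K` whose value at the tuple `x` of elements of `B` is a unit: the
denominators that may be inverted when rational functions are evaluated at `x`. -/
noncomputable def unitDenominators (x : τ → B) : Submonoid (MvPolynomial τ K) :=
  (IsUnit.submonoid B).comap (aeval x : MvPolynomial τ K →ₐ[K] B)

theorem unitDenominators_le_nonZeroDivisors [Nontrivial B] (x : τ → B) :
    unitDenominators K x ≤ nonZeroDivisors (MvPolynomial τ K) := by
  refine le_nonZeroDivisors_of_noZeroDivisors fun h => ?_
  have zero_isUnit : IsUnit (aeval x (0 : MvPolynomial τ K)) := h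
  rw [map_zero] at zero_isUnit
  exact not_isUnit_zero zero_isUnit

variable (K) in
/-- Evaluation at the tuple `x` of those rational functions over `K` whose denominator takes an
invertible value at `x`. -/
noncomputable def evalFraction (x : τ → B) : Localization (unitDenominators K x) →ₐ[K] B :=
  IsLocalization.liftAlgHom (M := unitDenominators K x) (f := aeval x) fun q => q.2

variable (K) in
/-- The subalgebra of `B` of all values at the tuple `x` of rational functions over `K` whose
denominator takes an invertible value at `x`. -/
noncomputable def rationalSubalgebra (x : τ → B) : Subalgebra K B :=
  (evalFraction K x).range

theorem evalFraction_mk'_mul (x : τ → B) (p : MvPolynomial τ K) (q : unitDenominators K x) :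
    evalFraction K x (IsLocalization.mk' _ p q) * aeval x (q : MvPolynomial τ K) = aeval x p := by
  have evalFraction_algebraMap (r : MvPolynomial τ K) :
      evalFraction K x (algebraMap _ _ r) = aeval x r := IsLocalization.lift_eq _ r
  rw [← evalFraction_algebraMap, ← map_mul, IsLocalization.mk'_spec, evalFraction_algebraMap]

theorem mem_rationalSubalgebra_iff {x : τ → B} {b : B} :
    b ∈ rationalSubalgebra K x ↔
      ∃ p q : MvPolynomial τ K, IsUnit (aeval x q) ∧ b * aeval x q = aeval x p := by
  constructor
  · rintro ⟨w, rfl⟩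
    obtain ⟨p, q, rfl⟩ := IsLocalization.exists_mk'_eq (unitDenominators K x) w
    exact ⟨p, q, q.2, evalFraction_mk'_mul x p q⟩
  · rintro ⟨p, q, hq, hb⟩
    exact ⟨IsLocalization.mk' _ p (⟨q, hq⟩ : unitDenominators K x),
      hq.mul_right_cancel ((evalFraction_mk'_mul x p ⟨q, hq⟩).trans hb.symm)⟩

theorem apply_mem_rationalSubalgebra (x : τ → B) (i : τ) : x i ∈ rationalSubalgebra K x :=
  mem_rationalSubalgebra_iff.2 ⟨X i, 1, by simp, by simp⟩

theorem mem_rationalSubalgebra_of_mul_eq_one {x : τ → B} {b c : B}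
    (hb : b ∈ rationalSubalgebra K x) (hbc : b * c = 1) : c ∈ rationalSubalgebra K x := by
  obtain ⟨p, q, hq, hbq⟩ := mem_rationalSubalgebra_iff.1 hb
  refine mem_rationalSubalgebra_iff.2 ⟨q, p, ?_, ?_⟩
  · exact hbq ▸ (IsUnit.of_mul_eq_one c hbc).mul hq
  · rw [← hbq, ← mul_assoc, mul_comm c b, hbc, one_mul]

theorem inv_mem_rationalSubalgebra {Y : Type*} {x : τ → Y → K} {g : Y → K}
    (hg : g ∈ rationalSubalgebra K x) (hg₀ : ∀ t, g t ≠ 0) : g⁻¹ ∈ rationalSubalgebra K x :=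
  mem_rationalSubalgebra_of_mul_eq_one hg (funext fun t => mul_inv_cancel₀ (hg₀ t))

theorem card_le_card_of_mem_rationalSubalgebra [Nontrivial B] {ι : Type*} [Fintype ι] [Fintype τ]
    {x : τ → B} {g : ι → B} (hg : ∀ i, g i ∈ rationalSubalgebra K x)
    (hind : AlgebraicIndependent K g) : Fintype.card ι ≤ Fintype.card τ := by
  choose w hw using hg
  have hw_ind : AlgebraicIndependent K w :=
    .of_comp (evalFraction K x) (by rwa [show evalFraction K x ∘ w = g from funext hw])
  simpa [trdeg_localization (unitDenominators_le_nonZeroDivisors x)]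
    using hw_ind.lift_cardinalMk_le_trdeg

end RationalSubalgebra

section VanishingIdeal

variable {K ι : Type*} [Field K]

theorem algebraicIndependent_iff_vanishingIdeal_range_eq_bot {Y : Type*} {g : ι → Y → K} :
    AlgebraicIndependent K g ↔ vanishingIdeal K (Set.range fun t i => g i t) = ⊥ := by
  have aeval_apply (p : MvPolynomial ι K) (t : Y) : aeval g p t = aeval (fun i => g i t) p :=
    comp_aeval_apply _ (Pi.evalAlgHom K (fun _ : Y => K) t) p
  simp only [algebraicIndependent_iff, eq_bot_iff, SetLike.le_def, mem_vanishingIdeal_iff,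
    Set.forall_mem_range, Ideal.mem_bot, funext_iff, aeval_apply, Pi.zero_apply]

theorem vanishingIdeal_closure [TopologicalSpace K] [IsTopologicalSemiring K] [T1Space K]
    (T : Set (ι → K)) : vanishingIdeal K (closure T) = vanishingIdeal K T := by
  refine le_antisymm (vanishingIdeal_anti_mono subset_closure) fun p hp => ?_
  have isClosed_zeros : IsClosed {t : ι → K | aeval t p = 0} :=
    isClosed_singleton.preimage (continuous_eval p)
  exact closure_minimal hp isClosed_zeros

theorem vanishingIdeal_eq_bot_of_pi_subset {s : ι → Set K} (hs : ∀ i, (s i).Infinite)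
    {T : Set (ι → K)} (hT : Set.univ.pi s ⊆ T) : vanishingIdeal K T = ⊥ :=
  eq_bot_iff.2 fun p hp => Ideal.mem_bot.2 <| funext_set s hs fun t ht => by
    simpa using hp t (hT ht)

theorem card_le_card_of_pi_subset_closure_range [TopologicalSpace K] [IsTopologicalSemiring K]
    [T1Space K] [Fintype ι] {τ Y : Type*} [Fintype τ] [Nonempty Y] {x : τ → Y → K}
    {g : ι → Y → K} (hg : ∀ i, g i ∈ rationalSubalgebra K x) {s : ι → Set K}
    (hs : ∀ i, (s i).Infinite) (hsub : Set.univ.pi s ⊆ closure (Set.range fun t i => g i t)) :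
    Fintype.card ι ≤ Fintype.card τ := by
  refine card_le_card_of_mem_rationalSubalgebra hg ?_
  rw [algebraicIndependent_iff_vanishingIdeal_range_eq_bot, ← vanishingIdeal_closure]
  exact vanishingIdeal_eq_bot_of_pi_subset hs hsub

end VanishingIdeal

section MarkovKernels

theorem exists_mem_stdSimplex_extending {α : Type*} [Fintype α] [DecidableEq α] (a₀ : α)
    {u : {a // a ≠ a₀} → ℝ} (hu : ∀ a, 0 ≤ u a) (hsum : ∑ a, u a ≤ 1) :
    ∃ p ∈ stdSimplex ℝ α, ∀ a : {a // a ≠ a₀}, p a = u a := by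
  let p : α → ℝ := fun a => if ha : a = a₀ then 1 - ∑ b, u b else u ⟨a, ha⟩
  have p_apply (a : {a // a ≠ a₀}) : p a = u a := dif_neg a.2
  have p_apply_base : p a₀ = 1 - ∑ b, u b := dif_pos rfl
  refine ⟨p, ⟨fun a => ?_, ?_⟩, p_apply⟩
  · rcases eq_or_ne a a₀ with rfl | ha
    · rw [p_apply_base]
      exact sub_nonneg.2 hsum
    · exact (hu ⟨a, ha⟩).trans_eq (p_apply ⟨a, ha⟩).symm
  · rw [Fintype.sum_eq_add_sum_subtype_ne _ a₀, p_apply_base]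
    simp only [p_apply, sub_add_cancel]

/-- Indices of the entries that determine a kernel in `Δ_{k,n}`: the probability of the all-zero
output is left out, because each row sums to one. -/
abbrev FreeEntry (k n : ℕ) : Type :=
  (Fin k → Bool) × {x : Fin n → Bool // x ≠ fun _ => false}

theorem card_freeEntry (k n : ℕ) : Fintype.card (FreeEntry k n) = 2 ^ k * (2 ^ n - 1) := by
  simp [FreeEntry, Fintype.card_subtype_compl]

/-- The projection of a kernel to its free entries. -/
def freeEntries {k n : ℕ} (P : (Fin k → Bool) → (Fin n → Bool) → ℝ) : FreeEntry k n → ℝ :=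
  fun e => P e.1 e.2

theorem continuous_freeEntries_kcomp {k m n : ℕ} (R : (Fin m → Bool) → (Fin n → Bool) → ℝ) :
    Continuous fun Q : (Fin k → Bool) → (Fin m → Bool) → ℝ => freeEntries (kcomp R Q) := by
  unfold freeEntries kcomp
  fun_prop

theorem pi_Icc_subset_freeEntries_image_markovKernels (k n : ℕ) :
    (Set.univ.pi fun _ => Set.Icc 0 ((2 : ℝ) ^ n)⁻¹) ⊆
      freeEntries '' markovKernels k n := by
  intro u hbox
  have hu (e : FreeEntry k n) : u e ∈ Set.Icc 0 ((2 : ℝ) ^ n)⁻¹ := hbox e trivial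
  have row_sum_le_one (y : Fin k → Bool) :
      ∑ x : {x : Fin n → Bool // x ≠ fun _ => false}, u (y, x) ≤ 1 := by
    calc ∑ x, u (y, x)
        ≤ Fintype.card {x : Fin n → Bool // x ≠ fun _ => false} • ((2 : ℝ) ^ n)⁻¹ :=
          sum_le_card_nsmul _ _ _ fun x _ => (hu (y, x)).2
      _ ≤ Fintype.card (Fin n → Bool) • ((2 : ℝ) ^ n)⁻¹ := by
          gcongr
          exact Fintype.card_subtype_le _
      _ = 1 := by simp
  choose P hP hPu using fun y =>
    exists_mem_stdSimplex_extending _ (fun x => (hu (y, x)).1) (row_sum_le_one y)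
  exact ⟨P, ⟨fun y => (hP y).1, fun y => (hP y).2⟩, funext fun e => hPu e.1 e.2⟩

end MarkovKernels

section SigmoidLayer

variable {k m n : ℕ}

/-- The weights `V` and biases `c` of a layer of `m` sigmoid units with `k` binary inputs. -/
abbrev LayerParam (k m : ℕ) : Type := (Fin m → Fin k → ℝ) × (Fin m → ℝ)

/-- The kernel in `F_{k,m}` with parameters `θ`. -/
noncomputable def layerKernel (θ : LayerParam k m) : (Fin k → Bool) → (Fin m → Bool) → ℝ :=
  fun y z => ∏ j, (if z j then sigmoid ((∑ i, θ.1 j i * bval (y i)) + θ.2 j)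
                   else 1 - sigmoid ((∑ i, θ.1 j i * bval (y i)) + θ.2 j))

theorem Fset_eq_range_layerKernel : Fset k m = Set.range (layerKernel (k := k) (m := m)) := by
  ext P
  simp only [Fset, Set.mem_ofPred_eq, Set.mem_range, Prod.exists, funext_iff, layerKernel,
    eq_comm (a := P _ _)]

/-- The exponentials of the weights (index `(j, some i)`) and biases (index `(j, none)`), as
functions of the parameters; the entries of `layerKernel` are rational in them. -/
noncomputable def expParam : Fin m × Option (Fin k) → LayerParam k m → ℝ
  | (j, some i) => fun θ => Real.exp (θ.1 j i)
  | (j, none) => fun θ => Real.exp (θ.2 j)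

theorem exp_activation_mem_rationalSubalgebra (y : Fin k → Bool) (j : Fin m) :
    (fun θ : LayerParam k m => Real.exp ((∑ i, θ.1 j i * bval (y i)) + θ.2 j)) ∈
      rationalSubalgebra ℝ expParam := by
  have exp_activation_eq :
      (fun θ : LayerParam k m => Real.exp ((∑ i, θ.1 j i * bval (y i)) + θ.2 j)) =
        (∏ i, if y i then expParam (j, some i) else 1) * expParam (j, none) := by
    funext θ
    rw [Real.exp_add, Real.exp_sum, Pi.mul_apply, prod_apply]
    congr 1
    refine prod_congr rfl fun i _ => ?_
    cases y i <;> simp [bval, expParam]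
  rw [exp_activation_eq]
  refine mul_mem (prod_mem fun i _ => ?_) (apply_mem_rationalSubalgebra _ _)
  split_ifs
  · exact apply_mem_rationalSubalgebra _ _
  · exact one_mem _

theorem sigmoid_comp_mem_rationalSubalgebra {τ Y : Type*} {x : τ → Y → ℝ} {a : Y → ℝ}
    (ha : (fun t => Real.exp (a t)) ∈ rationalSubalgebra ℝ x) :
    (fun t => sigmoid (a t)) ∈ rationalSubalgebra ℝ x := by
  have sigmoid_eq : (fun t => sigmoid (a t)) = (1 + (fun t => Real.exp (a t))⁻¹)⁻¹ := by
    funext t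
    simp [sigmoid, Real.exp_neg]
  rw [sigmoid_eq]
  refine inv_mem_rationalSubalgebra
    (add_mem (one_mem _) (inv_mem_rationalSubalgebra ha fun t => Real.exp_ne_zero _)) fun t => ?_
  exact (add_pos one_pos (inv_pos.2 (Real.exp_pos (a t)))).ne'

theorem layerKernel_mem_rationalSubalgebra (y : Fin k → Bool) (z : Fin m → Bool) :
    (fun θ => layerKernel θ y z) ∈ rationalSubalgebra ℝ expParam := by
  have layerKernel_eq : (fun θ => layerKernel θ y z) = ∏ j, fun θ : LayerParam k m =>
      if z j then sigmoid ((∑ i, θ.1 j i * bval (y i)) + θ.2 j)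
      else 1 - sigmoid ((∑ i, θ.1 j i * bval (y i)) + θ.2 j) := by
    funext θ
    rw [layerKernel, prod_apply]
  rw [layerKernel_eq]
  refine prod_mem fun j _ => ?_
  have unit_mem := sigmoid_comp_mem_rationalSubalgebra (exp_activation_mem_rationalSubalgebra y j)
  split_ifs
  · exact unit_mem
  · exact sub_mem (one_mem _) unit_mem

theorem kcomp_layerKernel_mem_rationalSubalgebra (R : (Fin m → Bool) → (Fin n → Bool) → ℝ)
    (y : Fin k → Bool) (x : Fin n → Bool) :
    (fun θ => kcomp R (layerKernel θ) y x) ∈ rationalSubalgebra ℝ expParam := by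
  have kcomp_eq : (fun θ : LayerParam k m => kcomp R (layerKernel θ) y x) =
      ∑ z, R z x • fun θ => layerKernel θ y z := by
    funext θ
    simp [kcomp, mul_comm]
  rw [kcomp_eq]
  exact sum_mem fun z _ => Subalgebra.smul_mem _ (layerKernel_mem_rationalSubalgebra y z) _

theorem freeEntries_image_subset_closure_range {R : (Fin m → Bool) → (Fin n → Bool) → ℝ}
    (h : markovKernels k n ⊆ kcomp R '' closure (Fset k m)) :
    freeEntries '' markovKernels k n ⊆
      closure (Set.range fun θ : LayerParam k m => freeEntries (kcomp R (layerKernel θ))) :=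
  calc freeEntries '' markovKernels k n
      ⊆ (fun Q => freeEntries (kcomp R Q)) '' closure (Fset k m) := by
        rw [← Set.image_image freeEntries (kcomp R)]
        exact Set.image_mono h
    _ ⊆ closure ((fun Q => freeEntries (kcomp R Q)) '' Fset k m) :=
        image_closure_subset_closure_image (continuous_freeEntries_kcomp R)
    _ = _ := by
        rw [Fset_eq_range_layerKernel, ← Set.range_comp]
        rfl

theorem two_pow_mul_le_of_markovKernels_subset {R : (Fin m → Bool) → (Fin n → Bool) → ℝ}
    (h : markovKernels k n ⊆ kcomp R '' closure (Fset k m)) :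
    2 ^ k * (2 ^ n - 1) ≤ m * (k + 1) := by
  have card_le : Fintype.card (FreeEntry k n) ≤ Fintype.card (Fin m × Option (Fin k)) :=
    card_le_card_of_pi_subset_closure_range
      (fun e => kcomp_layerKernel_mem_rationalSubalgebra R e.1 e.2)
      (fun _ => Set.Icc_infinite (by positivity))
      ((pi_Icc_subset_freeEntries_image_markovKernels k n).trans
        (freeEntries_image_subset_closure_range h))
  simpa [card_freeEntry] using card_le

end SigmoidLayer

theorem lower_bound_fixed_second_layer_general {k n m : ℕ}
    (R : (Fin m → Bool) → (Fin n → Bool) → ℝ)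
    (h : markovKernels k n ⊆ kcomp R '' closure (Fset k m)) :
    ⌈(2 ^ k * (2 ^ n - 1) : ℝ) / (k + 1)⌉₊ ≤ m := by
  rw [Nat.ceil_le, div_le_iff₀ (by positivity)]
  have card_le : ((2 ^ k * (2 ^ n - 1) : ℕ) : ℝ) ≤ (m * (k + 1) : ℕ) :=
    Nat.cast_le.2 (two_pow_mul_le_of_markovKernels_subset h)
  push_cast [Nat.one_le_two_pow] at card_le
  exact card_le

/-- Proposition 3, first part (lower bound, fixed second layer): if some `R` in the closure
of `F_{m,n}` satisfies `{R ∘ Q : Q ∈ closure F_{k,m}} = Δ_{k,n}`, then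
`m ≥ ⌈2^k (2^n - 1) / (k+1)⌉`. -/
theorem lower_bound_fixed_second_layer
    (k n m : ℕ) (hk : 1 ≤ k) (hn : 1 ≤ n)
    (h : ∃ R ∈ closure (Fset m n),
      (fun Q => kcomp R Q) '' closure (Fset k m) = markovKernels k n) :
    ⌈(2 ^ k * (2 ^ n - 1) : ℝ) / (k + 1)⌉₊ ≤ m := by
  obtain ⟨R, _, hR⟩ := h
  exact lower_bound_fixed_second_layer_general R hR.superset
end

section
/- Let n ≥ 1 and N = 2^n − 1. There exist a matrix W ∈ ℝ^{n×N} and a vector b ∈ ℝ^n such that for every z ∈ {0,1}^N the vector Wz + b lies in the l(z)-th open orthant of ℝ^n; that is, every entry of Wz + b is nonzero and the sign pattern satisfies int(hs(Wz+b)) = l(z), where hs is the entrywise Heaviside function (value 0 on negative entries, value 1 on positive entries). -/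
open Finset

/-!
Attach to each level `l` the weight `± 2 ^ l`, with sign `+` exactly when bit `j` of `l` is set.
In a sum of such weights over distinct levels the highest level outweighs all the others together,
so the sum has the sign of its top term. Taking level `0` as the bias and level `i + 1` as the
weight of the `i`-th input, the levels present for the input `z` have maximum `l(z)`; hence the
`j`-th output has the sign prescribed by bit `j` of `l(z)`.
-/

section DominantTerm

open SignType

theorem sign_add_eq_sign_left_of_abs_lt {G : Type*} [AddCommGroup G] [LinearOrder G]
    [IsOrderedAddMonoid G] {x y : G} (hxy : |y| < |x|) : sign (x + y) = sign x := by
  obtain ⟨hlower, hupper⟩ := abs_lt.mp hxy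
  rcases le_total 0 x with hx | hx
  · rw [abs_of_nonneg hx] at hlower hupper
    rw [sign_pos (neg_lt_iff_pos_add'.mp hlower),
      sign_pos (neg_lt_self_iff.mp (hlower.trans hupper))]
  · rw [abs_of_nonpos hx] at hlower hupper
    rw [sign_neg (lt_neg_iff_add_neg'.mp hupper),
      sign_neg (neg_pos.mp (neg_lt_self_iff.mp (hlower.trans hupper)))]

theorem sign_sum_eq_sign_of_sum_erase_abs_lt {ι G : Type*} [DecidableEq ι] [AddCommGroup G]
    [LinearOrder G] [IsOrderedAddMonoid G] {s : Finset ι} {a : ι → G} {m : ι} (hm : m ∈ s)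
    (hdom : ∑ i ∈ s.erase m, |a i| < |a m|) : sign (∑ i ∈ s, a i) = sign (a m) := by
  rw [← add_sum_erase s a hm]
  exact sign_add_eq_sign_left_of_abs_lt ((abs_sum_le_sum_abs a _).trans_lt hdom)

theorem sign_sum_eq_sign_of_abs_eq_pow {R : Type*} [Ring R] [LinearOrder R]
    [IsStrictOrderedRing R] {k : ℕ} (hk : 2 ≤ k) {a : ℕ → R} (ha : ∀ l, |a l| = (k : R) ^ l)
    {s : Finset ℕ} {m : ℕ} (hm : IsGreatest (s : Set ℕ) m) :
    sign (∑ l ∈ s, a l) = sign (a m) := by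
  refine sign_sum_eq_sign_of_sum_erase_abs_lt hm.1 ?_
  have hlt : ∀ l ∈ s.erase m, l < m := fun l hl =>
    (hm.2 (mem_of_mem_erase hl)).lt_of_ne (ne_of_mem_erase hl)
  simp only [ha]
  exact_mod_cast Nat.geomSum_lt hk hlt

end DominantTerm

section ActiveLevels

variable {N : ℕ} (z : Fin N → Bool)

/-- The 1-based positions of the nonzero entries of `z`, together with `0`, which stands for the
always active bias input. -/
def activeLevels : Finset ℕ :=
  insert 0 ((univ.filter fun i => z i = true).image fun i : Fin N => (i : ℕ) + 1)

theorem isGreatest_activeLevels : IsGreatest (activeLevels z : Set ℕ) (lidx z) := by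
  have hlidx : lidx z = (activeLevels z).sup id := by
    simp [lidx, activeLevels, sup_image]
  rw [hlidx]
  refine ⟨?_, fun l hl => le_sup (f := id) hl⟩
  obtain ⟨l, hl, hsup⟩ := exists_mem_eq_sup (activeLevels z) (insert_nonempty _ _) id
  exact hsup ▸ hl

theorem sum_activeLevels (w : ℕ → ℝ) :
    ∑ l ∈ activeLevels z, w l = ∑ i : Fin N, w (i + 1) * bval (z i) + w 0 := by
  have hinj : Function.Injective fun i : Fin N => (i : ℕ) + 1 :=
    (add_left_injective 1).comp Fin.val_injective
  rw [activeLevels, sum_insert (by simp), sum_image hinj.injOn, add_comm]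
  simp only [bval, mul_ite, mul_one, mul_zero, sum_filter]

theorem lidx_le_s9 : lidx z ≤ N :=
  Finset.sup_le fun i _ => i.isLt

end ActiveLevels

theorem intval_eq_ofBits {k : ℕ} (y : Fin k → Bool) : intval y = Nat.ofBits y := by
  induction k with
  | zero => simp [intval]
  | succ k ih =>
    rw [Nat.ofBits_succ, ← ih]
    cases h : y 0 <;>
      simp [intval, Fin.sum_univ_succ, h, mul_sum, pow_succ', add_comm]

theorem intval_binVec_of_lt {n l : ℕ} (hl : l < 2 ^ n) : intval (binVec n l) = l := by
  rw [intval_eq_ofBits]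
  exact (Nat.ofBits_testBit l n).trans (Nat.mod_eq_of_lt hl)

/-- The real weight of level `l` in the `j`-th output: `2 ^ l`, with sign `+` or `-` according
to whether bit `j` of `l` is set. -/
def bitWeight (j l : ℕ) : ℝ := if l.testBit j then 2 ^ l else -2 ^ l

theorem abs_bitWeight (j l : ℕ) : |bitWeight j l| = 2 ^ l := by
  unfold bitWeight
  split_ifs <;> simp

theorem sign_bitWeight (j l : ℕ) :
    SignType.sign (bitWeight j l) = if l.testBit j then 1 else -1 := by
  unfold bitWeight
  split_ifs <;> simp

theorem sign_sum_bitWeight {N : ℕ} (j : ℕ) (z : Fin N → Bool) :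
    SignType.sign (∑ i : Fin N, bitWeight j (i + 1) * bval (z i) + bitWeight j 0) =
      if (lidx z).testBit j then 1 else -1 := by
  rw [← sum_activeLevels z (bitWeight j), ← sign_bitWeight]
  exact sign_sum_eq_sign_of_abs_eq_pow le_rfl (by simpa using abs_bitWeight j)
    (isGreatest_activeLevels z)

/-- Lemma 3: for `N = 2^n - 1` there is an affine map `z ↦ Wz + b` sending
`{z : l(z) = l}` into the `l`-th open orthant of `ℝ^n`, for every `l ∈ {0,…,N}`. -/
theorem affine_map_to_orthants (n : ℕ) (hn : 1 ≤ n) :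
    ∃ (W : Fin n → Fin (2 ^ n - 1) → ℝ) (b : Fin n → ℝ),
      ∀ z : Fin (2 ^ n - 1) → Bool, ∃ s : Fin n → Bool,
        intval s = lidx z ∧
        ∀ j, (s j = true → 0 < (∑ i, W j i * bval (z i)) + b j) ∧
             (s j = false → (∑ i, W j i * bval (z i)) + b j < 0) := by
  refine ⟨fun j i => bitWeight j (i + 1), fun j => bitWeight j 0, fun z =>
    ⟨binVec n (lidx z), ?_, fun j => ⟨fun hbit => ?_, fun hbit => ?_⟩⟩⟩
  · exact intval_binVec_of_lt ((lidx_le_s9 z).trans_lt (Nat.sub_one_lt (by positivity)))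
  · rw [← sign_eq_one_iff, sign_sum_bitWeight]
    exact if_pos hbit
  · rw [← sign_eq_neg_one_iff, sign_sum_bitWeight]
    exact if_neg (Bool.eq_false_iff.mp hbit)
end
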